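/- arXiv:2511.19139 — 3 statements merged into one kernel-verified Lean document; each statement's English description precedes it below -/
import Mathlib

section
/- Let γ ∈ SL(2,ℤ) and k ≥ 1 with det(1 - γ^k) ≠ 0, and let d ≥ 1 be a divisor of k. Multiplication by γ^d induces a well-defined ℤ-linear endomorphism of Q_k(γ) = coker(1 - γ^k), and the number of fixed points of this endomorphism equals |det(1 - γ^d)| = |tr(γ^d) - 2|. -/
/-- `Q_k(γ) = coker(1 - γ^k)`, the cokernel of `1 - γ^k` acting on `Fin 2 → ℤ`. -/
abbrev Qk (γ : Matrix.SpecialLinearGroup (Fin 2) ℤ) (k : ℕ) :=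
  (Fin 2 → ℤ) ⧸ LinearMap.range (Matrix.toLin'
    (1 - ((γ ^ k : Matrix.SpecialLinearGroup (Fin 2) ℤ) : Matrix (Fin 2) (Fin 2) ℤ)))

theorem card_coker_aux (A : Matrix (Fin 2) (Fin 2) ℤ) (hA : A.det ≠ 0) :
    Nat.card ((Fin 2 → ℤ) ⧸ LinearMap.range (Matrix.toLin' A)) = A.det.natAbs := by
  have hinj : Function.Injective (Matrix.toLin' A) := by
    intro v w h
    exact Matrix.mulVec_injective_of_det_ne_zero hA (by simpa using h)
  have h := Submodule.natAbs_det_equiv (LinearMap.range (Matrix.toLin' A))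
    (LinearEquiv.ofInjective (Matrix.toLin' A) hinj)
  rw [← h, ← LinearMap.det_toLin' A]
  rfl

theorem factor_aux (M N A B S : Matrix (Fin 2) (Fin 2) ℤ) (hA : A = 1 - M) (hB : B = 1 - N)
    (h1 : A * S = B) (h2 : S * A = B) (hdet : B.det ≠ 0) :
    (∃ g : Module.End ℤ ((Fin 2 → ℤ) ⧸ LinearMap.range (Matrix.toLin' B)), ∀ v : Fin 2 → ℤ,
      g (Submodule.Quotient.mk v) = Submodule.Quotient.mk (Matrix.mulVec M v)) ∧
    ∀ g : Module.End ℤ ((Fin 2 → ℤ) ⧸ LinearMap.range (Matrix.toLin' B)),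
      (∀ v : Fin 2 → ℤ, g (Submodule.Quotient.mk v) = Submodule.Quotient.mk (Matrix.mulVec M v)) →
      Nat.card {x // g x = x} = A.det.natAbs := by
  have hdA : A.det ≠ 0 := by
    intro h; apply hdet; rw [← h1, Matrix.det_mul, h, zero_mul]
  have hdS : S.det ≠ 0 := by
    intro h; apply hdet; rw [← h1, Matrix.det_mul, h, mul_zero]
  have hM : M = 1 - A := by rw [hA]; abel
  have hcomm : M * B = B * M := by
    have : A * B = B * A := by
      conv_lhs => rw [← h2]
      conv_rhs => rw [← h1]
      rw [Matrix.mul_assoc]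
    rw [hM, sub_mul, mul_sub, this]; simp
  refine ⟨⟨Submodule.mapQ _ _ (Matrix.toLin' M) ?_, ?_⟩, ?_⟩
  · rintro _ ⟨w, rfl⟩
    refine ⟨Matrix.mulVec M w, ?_⟩
    rw [Matrix.toLin'_apply, Matrix.toLin'_apply, Matrix.toLin'_apply, Matrix.mulVec_mulVec,
      Matrix.mulVec_mulVec, hcomm]
  · intro v
    rw [← Matrix.toLin'_apply]
    rfl
  · intro g hg
    let f : (Fin 2 → ℤ) →ₗ[ℤ] ((Fin 2 → ℤ) ⧸ LinearMap.range (Matrix.toLin' B)) :=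
      (Submodule.mkQ _).comp (Matrix.toLin' S)
    have hf : ∀ w, f w = Submodule.Quotient.mk (S.mulVec w) := fun w => by
      rw [← Matrix.toLin'_apply]; rfl
    have hker : LinearMap.ker f = LinearMap.range (Matrix.toLin' A) := by
      ext w
      rw [LinearMap.mem_ker, hf, Submodule.Quotient.mk_eq_zero]
      constructor
      · rintro ⟨u, hu⟩
        refine ⟨u, ?_⟩
        apply Matrix.mulVec_injective_of_det_ne_zero hdS
        rw [← hu, Matrix.toLin'_apply, Matrix.toLin'_apply, Matrix.mulVec_mulVec, h2]
      · rintro ⟨u, rfl⟩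
        refine ⟨u, ?_⟩
        rw [Matrix.toLin'_apply, Matrix.toLin'_apply, Matrix.mulVec_mulVec, h2]
    have hfix : ∀ v : Fin 2 → ℤ, g (Submodule.Quotient.mk v) = Submodule.Quotient.mk v ↔
        A.mulVec v ∈ LinearMap.range (Matrix.toLin' B) := by
      intro v
      rw [hg, eq_comm, Submodule.Quotient.eq, hA, Matrix.sub_mulVec, Matrix.one_mulVec]
    have hrange : ∀ x, g x = x ↔ x ∈ LinearMap.range f := by
      intro x
      obtain ⟨v, rfl⟩ := Submodule.Quotient.mk_surjective _ x
      rw [hfix]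
      constructor
      · rintro ⟨u, hu⟩
        refine ⟨u, ?_⟩
        rw [hf]
        congr 1
        apply Matrix.mulVec_injective_of_det_ne_zero hdA
        rw [← hu, Matrix.toLin'_apply, Matrix.mulVec_mulVec, h1]
      · rintro ⟨u, hu⟩
        rw [← hfix, ← hu, hf, hfix]
        refine ⟨u, ?_⟩
        rw [Matrix.toLin'_apply, Matrix.mulVec_mulVec, h1]
    rw [← card_coker_aux A hdA, ← hker, Nat.card_congr f.quotKerEquivRange.toEquiv]
    exact Nat.card_congr (Equiv.subtypeEquivRight hrange)

/-- if `det(1 - γ^k) ≠ 0` and `d ∣ k` with `d ≥ 1`, then multiplication by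
`γ^d` induces a well-defined `ℤ`-linear endomorphism of `Q_k(γ)`, and the number of its
fixed points equals `|det(1 - γ^d)| = |tr(γ^d) - 2|`. -/
theorem stmt5 (γ : Matrix.SpecialLinearGroup (Fin 2) ℤ) (k d : ℕ)
    (hk : 1 ≤ k) (hd : 1 ≤ d) (hdk : d ∣ k)
    (hdet : (1 - ((γ ^ k : Matrix.SpecialLinearGroup (Fin 2) ℤ) :
        Matrix (Fin 2) (Fin 2) ℤ)).det ≠ 0) :
    (∃ g : Module.End ℤ (Qk γ k), ∀ v : Fin 2 → ℤ,
      g (Submodule.Quotient.mk v) =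
        Submodule.Quotient.mk (Matrix.mulVec
          ((γ ^ d : Matrix.SpecialLinearGroup (Fin 2) ℤ) : Matrix (Fin 2) (Fin 2) ℤ) v)) ∧
    ∀ g : Module.End ℤ (Qk γ k),
      (∀ v : Fin 2 → ℤ, g (Submodule.Quotient.mk v) =
        Submodule.Quotient.mk (Matrix.mulVec
          ((γ ^ d : Matrix.SpecialLinearGroup (Fin 2) ℤ) : Matrix (Fin 2) (Fin 2) ℤ) v)) →
      Nat.card {x : Qk γ k // g x = x} =
          ((1 - ((γ ^ d : Matrix.SpecialLinearGroup (Fin 2) ℤ) :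
            Matrix (Fin 2) (Fin 2) ℤ)).det).natAbs ∧
        ((1 - ((γ ^ d : Matrix.SpecialLinearGroup (Fin 2) ℤ) :
            Matrix (Fin 2) (Fin 2) ℤ)).det).natAbs =
          (Matrix.trace ((γ ^ d : Matrix.SpecialLinearGroup (Fin 2) ℤ) :
            Matrix (Fin 2) (Fin 2) ℤ) - 2).natAbs := by
  obtain ⟨m, rfl⟩ := hdk
  have key := factor_aux ((γ ^ d : Matrix.SpecialLinearGroup (Fin 2) ℤ) :
      Matrix (Fin 2) (Fin 2) ℤ) _ _ _
    (∑ i ∈ Finset.range m, ((γ ^ d : Matrix.SpecialLinearGroup (Fin 2) ℤ) :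
      Matrix (Fin 2) (Fin 2) ℤ) ^ i) rfl rfl
    (by rw [mul_neg_geom_sum, ← Matrix.SpecialLinearGroup.coe_pow, ← pow_mul])
    (by rw [geom_sum_mul_neg, ← Matrix.SpecialLinearGroup.coe_pow, ← pow_mul]) hdet
  refine ⟨key.1, fun g hg => ⟨key.2 g hg, ?_⟩⟩
  have h1 := (γ ^ d).det_coe
  generalize ((γ ^ d : Matrix.SpecialLinearGroup (Fin 2) ℤ) :
      Matrix (Fin 2) (Fin 2) ℤ) = M at h1
  rw [← Int.natAbs_neg]
  congr 1
  rw [Matrix.det_fin_two] at h1 ⊢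
  simp [Matrix.trace_fin_two]
  linarith
end

section
/- Let γ ∈ SL(2,ℤ) and k ≥ 1, and suppose tr(γ) ≠ 2, tr(γ) ≠ -2, and γ^k ≠ 1. Then k · c_k(γ) = ∑_{d ∣ k} φ(k/d) · |tr(γ^d) - 2|, where φ is Euler's totient function and the sum is over positive divisors d of k. -/
open Matrix

theorem burnside_aux {X : Type*} [Finite X] (f : X → X) (k : ℕ) (hk : 0 < k)
    (hf : ∀ x, f^[k] x = x) :
    k * Nat.card (Quot fun x y : X => ∃ j : ℕ, f^[j] x = y) =
      ∑ j ∈ Finset.range k, Nat.card {x : X // f^[j] x = x} := by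
  classical
  have : NeZero k := ⟨hk.ne'⟩
  have := Fintype.ofFinite X
  obtain ⟨n, rfl⟩ : ∃ n, k = n + 1 := ⟨k - 1, by omega⟩
  let e : Equiv.Perm X := ⟨f, f^[n], fun x => by
    rw [← Function.iterate_succ_apply]; exact hf x, fun x => by
    rw [← Function.iterate_succ_apply' f]; exact hf x⟩
  have hej : ∀ (j : ℕ) x, (e ^ j) x = f^[j] x := fun j x => by
    rw [← Equiv.Perm.iterate_eq_pow]; rfl
  have hek : e ^ (n + 1) = 1 := by
    ext x; rw [hej, hf]; rfl
  let φ : ZMod (n + 1) →+ Additive (Equiv.Perm X) :=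
    ZMod.lift (n + 1) ⟨zmultiplesHom (Additive (Equiv.Perm X)) (Additive.ofMul e), by
      have : Additive.ofMul (e ^ (n + 1)) = 0 := by rw [hek]; rfl
      rw [ofMul_pow] at this
      rw [zmultiplesHom_apply, natCast_zsmul]
      exact this⟩
  let ψ : Multiplicative (ZMod (n + 1)) →* Equiv.Perm X := AddMonoidHom.toMultiplicativeLeft φ
  let : MulAction (Multiplicative (ZMod (n + 1))) X := MulAction.compHom X ψ
  have key : ∀ (j : ℕ) (x : X),
      (Multiplicative.ofAdd ((j : ℕ) : ZMod (n + 1))) • x = f^[j] x := by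
    intro j x
    rw [← hej]
    have h1 : φ ((j : ℕ) : ZMod (n + 1)) = Additive.ofMul (e ^ j) := by
      have := ZMod.lift_coe (n + 1) (⟨zmultiplesHom (Additive (Equiv.Perm X)) (Additive.ofMul e), by
        have : Additive.ofMul (e ^ (n + 1)) = 0 := by rw [hek]; rfl
        rw [ofMul_pow] at this
        rw [zmultiplesHom_apply, natCast_zsmul]
        exact this⟩ : {f : ℤ →+ Additive (Equiv.Perm X) // f (n + 1 : ℕ) = 0}) (j : ℤ)
      rw [ofMul_pow]
      simpa using this
    change (φ ((j : ℕ) : ZMod (n + 1))).toMul x = _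
    rw [h1]; rfl
  have hB := MulAction.sum_card_fixedBy_eq_card_orbits_mul_card_group
    (Multiplicative (ZMod (n + 1))) X
  have hq : Nat.card (Quot fun x y : X => ∃ j : ℕ, f^[j] x = y) =
      Fintype.card (Quotient (MulAction.orbitRel (Multiplicative (ZMod (n + 1))) X)) := by
    rw [← Nat.card_eq_fintype_card]
    refine Nat.card_congr (Quot.congrRight fun x y => ?_)
    constructor
    · rintro ⟨j, rfl⟩
      refine Setoid.symm' _ ?_
      exact ⟨_, key j x⟩
    · intro h
      obtain ⟨m, hm⟩ := Setoid.symm' _ h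
      refine ⟨(Multiplicative.toAdd m).val, ?_⟩
      rw [← key, ZMod.natCast_zmod_val]
      exact hm
  rw [hq, mul_comm]
  have hc : Fintype.card (Multiplicative (ZMod (n + 1))) = n + 1 := by
    rw [Fintype.card_multiplicative, ZMod.card]
  rw [hc] at hB
  rw [← hB, Finset.sum_range]
  refine Fintype.sum_equiv (Multiplicative.toAdd) _ _ fun m => ?_
  rw [← Nat.card_eq_fintype_card]
  refine Nat.card_congr (Equiv.subtypeEquivRight fun x => ?_)
  rw [← key]
  have hm : (((Multiplicative.toAdd m : Fin (n+1)) : ℕ) : ZMod (n + 1)) = Multiplicative.toAdd m :=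
    ZMod.natCast_zmod_val (n := n+1) (Multiplicative.toAdd m)
  exact Iff.of_eq (congrArg (fun t : ZMod (n + 1) => (Multiplicative.ofAdd t) • x = x) hm.symm)

theorem sum_gcd_aux (k : ℕ) (hk : 0 < k) (F : ℕ → ℕ) :
    ∑ j ∈ Finset.range k, F (k.gcd j) = ∑ d ∈ Nat.divisors k, Nat.totient (k / d) * F d := by
  rw [← Finset.sum_fiberwise_of_maps_to (t := Nat.divisors k) (g := fun j => k.gcd j)
    (fun x _ => Nat.mem_divisors.2 ⟨Nat.gcd_dvd_left _ _, hk.ne'⟩)]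
  refine Finset.sum_congr rfl fun d hd => ?_
  rw [Nat.totient_div_of_dvd (Nat.dvd_of_mem_divisors hd), ← smul_eq_mul, ← Finset.sum_const]
  refine Finset.sum_congr rfl fun j hj => ?_
  rw [(Finset.mem_filter.1 hj).2]

theorem card_coker_aux_s8 (M : Matrix (Fin 2) (Fin 2) ℤ) (h : M.det ≠ 0) :
    Nat.card ((Fin 2 → ℤ) ⧸ LinearMap.range (Matrix.toLin' M)) = M.det.natAbs := by
  have hinj : Function.Injective (Matrix.toLin' M) := by
    intro x y hxy
    simp only [Matrix.toLin'_apply] at hxy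
    have : M *ᵥ (x - y) = 0 := by rw [Matrix.mulVec_sub, hxy, sub_self]
    exact sub_eq_zero.1 (Matrix.eq_zero_of_mulVec_eq_zero h this)
  rw [← Submodule.natAbs_det_equiv _ (LinearEquiv.ofInjective _ hinj), ← LinearMap.det_toLin']
  congr 1

theorem trace_aux (A : Matrix (Fin 2) (Fin 2) ℤ) (hA : A.det = 1) :
    (1 - A).det = 2 - A.trace := by
  rw [Matrix.det_fin_two] at *
  rw [Matrix.trace_fin_two]
  simp
  linarith

theorem pow_lin_aux (A : Matrix (Fin 2) (Fin 2) ℤ) (hA : A.det = 1) (k : ℕ) :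
    ∃ a b : ℤ, (A ^ k) 0 0 = a * A 0 0 + b ∧ (A ^ k) 0 1 = a * A 0 1 ∧
      (A ^ k) 1 0 = a * A 1 0 ∧ (A ^ k) 1 1 = a * A 1 1 + b := by
  induction k with
  | zero => exact ⟨0, 1, by simp⟩
  | succ k ih =>
    obtain ⟨a, b, h1, h2, h3, h4⟩ := ih
    rw [Matrix.det_fin_two] at hA
    refine ⟨a * (A 0 0 + A 1 1) + b, -a, ?_, ?_, ?_, ?_⟩ <;>
      simp only [pow_succ, Matrix.mul_apply, Fin.sum_univ_two, h1, h2, h3, h4]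
    · linear_combination (-a) * hA
    · ring
    · ring
    · linear_combination (-a) * hA

theorem det_ne_aux (A : Matrix (Fin 2) (Fin 2) ℤ) (hA : A.det = 1) (k : ℕ)
    (h1 : A.trace ≠ 2) (h2 : A.trace ≠ -2) (h3 : A ^ k ≠ 1) : (A ^ k).trace ≠ 2 := by
  intro ht
  obtain ⟨a, b, e1, e2, e3, e4⟩ := pow_lin_aux A hA k
  have hd : (A ^ k).det = 1 := by rw [Matrix.det_pow, hA, one_pow]
  rw [Matrix.det_fin_two] at hA hd
  rw [Matrix.trace_fin_two] at h1 h2 ht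
  rw [e1, e4] at ht
  rw [e1, e2, e3, e4] at hd
  have : a ^ 2 * ((A 0 0 + A 1 1 - 2) * (A 0 0 + A 1 1 + 2)) = 0 := by
    linear_combination (a * A 0 0 + b + (a * A 1 1 + b) + 2) * ht - 4 * hd + 4 * a ^ 2 * hA
  have ha : a = 0 := by
    rcases mul_eq_zero.1 this with h | h
    · exact pow_eq_zero_iff (two_ne_zero) |>.1 h
    · rcases mul_eq_zero.1 h with h | h <;> omega
  subst ha
  have hb : b = 1 := by omega
  subst hb
  apply h3
  ext i j
  fin_cases i <;> fin_cases j <;> simp [e1, e2, e3, e4]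

theorem iter_aux (γ : Matrix.SpecialLinearGroup (Fin 2) ℤ) (k : ℕ)
    (g : Module.End ℤ (Qk γ k))
    (hg : ∀ v : Fin 2 → ℤ, g (Submodule.Quotient.mk v) =
      Submodule.Quotient.mk (Matrix.mulVec ((γ : Matrix (Fin 2) (Fin 2) ℤ)) v)) (j : ℕ)
    (v : Fin 2 → ℤ) : (g ^ j) (Submodule.Quotient.mk v) =
      Submodule.Quotient.mk (Matrix.mulVec ((γ : Matrix (Fin 2) (Fin 2) ℤ) ^ j) v) := by
  induction j with
  | zero => simp
  | succ j ih =>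
    rw [pow_succ', Module.End.mul_apply, ih, hg, Matrix.mulVec_mulVec, ← pow_succ']

theorem fix_aux (γ : Matrix.SpecialLinearGroup (Fin 2) ℤ) (k : ℕ)
    (g : Module.End ℤ (Qk γ k)) [Finite (Qk γ k)]
    (hg : ∀ v : Fin 2 → ℤ, g (Submodule.Quotient.mk v) =
      Submodule.Quotient.mk (Matrix.mulVec ((γ : Matrix (Fin 2) (Fin 2) ℤ)) v)) (d : ℕ)
    (hd : d ∣ k) (h0 : (1 - (γ : Matrix (Fin 2) (Fin 2) ℤ) ^ d).det ≠ 0) :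
    Nat.card {x : Qk γ k // (g ^ d) x = x} =
      (1 - (γ : Matrix (Fin 2) (Fin 2) ℤ) ^ d).det.natAbs := by
  rw [← card_coker_aux_s8 _ h0]
  let f : Qk γ k →+ Qk γ k := ((1 - g ^ d : Module.End ℤ (Qk γ k))).toAddMonoidHom
  have hf : ∀ x, f x = x - (g ^ d) x := fun x => rfl
  have h1 : Nat.card {x : Qk γ k // (g ^ d) x = x} = Nat.card f.ker := by
    refine Nat.card_congr (Equiv.subtypeEquivRight fun x => ?_)
    rw [AddMonoidHom.mem_ker, hf, sub_eq_zero, eq_comm]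
  rw [h1, ← AddSubgroup.index_range]
  let π : (Fin 2 → ℤ) →+ Qk γ k := (Submodule.mkQ _).toAddMonoidHom
  have hπ : ∀ v, π v = Submodule.Quotient.mk v := fun v => rfl
  have hs : Function.Surjective π := Submodule.mkQ_surjective _
  rw [← AddSubgroup.index_comap_of_surjective _ hs]
  have : f.range.comap π = (LinearMap.range (Matrix.toLin'
      (1 - (γ : Matrix (Fin 2) (Fin 2) ℤ) ^ d))).toAddSubgroup := by
    ext v
    simp only [AddSubgroup.mem_comap, AddMonoidHom.mem_range, Submodule.mem_toAddSubgroup,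
      LinearMap.mem_range, Matrix.toLin'_apply]
    constructor
    · rintro ⟨x, hx⟩
      obtain ⟨w, rfl⟩ := Submodule.mkQ_surjective _ x
      rw [hf, Submodule.mkQ_apply, iter_aux γ k g hg, hπ, ← Submodule.Quotient.mk_sub,
        Submodule.Quotient.eq] at hx
      obtain ⟨u, hu⟩ := hx
      rw [Matrix.toLin'_apply, Matrix.SpecialLinearGroup.coe_pow] at hu
      obtain ⟨c, rfl⟩ := hd
      obtain ⟨B, hB⟩ : (1 - (γ : Matrix (Fin 2) (Fin 2) ℤ) ^ d) ∣
          (1 - (γ : Matrix (Fin 2) (Fin 2) ℤ) ^ (d * c)) := by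
        rw [pow_mul]; exact one_sub_dvd_one_sub_pow _ _
      refine ⟨w - B *ᵥ u, ?_⟩
      rw [Matrix.mulVec_sub, Matrix.mulVec_mulVec, ← hB, hu, Matrix.sub_mulVec, Matrix.one_mulVec]
      abel
    · rintro ⟨w, rfl⟩
      refine ⟨Submodule.Quotient.mk w, ?_⟩
      rw [hf, iter_aux γ k g hg, hπ, Matrix.sub_mulVec, Matrix.one_mulVec,
        Submodule.Quotient.mk_sub]
  rw [this]
  rfl

/-- if `tr(γ) ≠ ±2` and `γ^k ≠ 1`, then `k · c_k(γ) = ∑_{d ∣ k} φ(k/d) ·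
|tr(γ^d) - 2|`, where `c_k(γ)` is the number of orbits of the cyclic group generated by the
endomorphism `g` of `Q_k(γ)` induced by multiplication by `γ`, acting on the torsion
submodule of `Q_k(γ)`. -/
theorem stmt8 (γ : Matrix.SpecialLinearGroup (Fin 2) ℤ) (k : ℕ) (hk : 1 ≤ k)
    (htr : Matrix.trace ((γ : Matrix (Fin 2) (Fin 2) ℤ)) ≠ 2)
    (htr' : Matrix.trace ((γ : Matrix (Fin 2) (Fin 2) ℤ)) ≠ -2)
    (hγk : γ ^ k ≠ 1)
    (g : Module.End ℤ (Qk γ k))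
    (hg : ∀ v : Fin 2 → ℤ, g (Submodule.Quotient.mk v) =
      Submodule.Quotient.mk (Matrix.mulVec ((γ : Matrix (Fin 2) (Fin 2) ℤ)) v)) :
    k * Nat.card (Quot fun x y : Submodule.torsion ℤ (Qk γ k) =>
        ∃ j : ℕ, (g ^ j) (x : Qk γ k) = (y : Qk γ k)) =
      ∑ d ∈ Nat.divisors k, Nat.totient (k / d) *
        (Matrix.trace ((γ ^ d : Matrix.SpecialLinearGroup (Fin 2) ℤ) :
          Matrix (Fin 2) (Fin 2) ℤ) - 2).natAbs := by
  have hdet : ∀ d : ℕ, (1 - (γ : Matrix (Fin 2) (Fin 2) ℤ) ^ d).det =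
      2 - ((γ : Matrix (Fin 2) (Fin 2) ℤ) ^ d).trace := fun d =>
    trace_aux _ (by rw [Matrix.det_pow, γ.2, one_pow])
  have hne : ∀ d, d ∣ k → (1 - (γ : Matrix (Fin 2) (Fin 2) ℤ) ^ d).det ≠ 0 := by
    intro d hd h
    rw [hdet] at h
    refine det_ne_aux _ γ.2 d htr htr' ?_ (by omega)
    intro h1
    obtain ⟨c, rfl⟩ := hd
    apply hγk
    rw [pow_mul]
    have : γ ^ d = 1 := Subtype.ext (by rw [Matrix.SpecialLinearGroup.coe_pow, h1]; rfl)
    rw [this, one_pow]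
  have hcard := card_coker_aux_s8 _ (hne k dvd_rfl)
  have hfin : Finite (Qk γ k) := by
    apply Nat.finite_of_card_ne_zero
    rw [Qk, Matrix.SpecialLinearGroup.coe_pow, hcard]
    exact Int.natAbs_ne_zero.2 (hne k dvd_rfl)
  have htop : ∀ x : Qk γ k, x ∈ Submodule.torsion ℤ (Qk γ k) := by
    intro x
    rw [Submodule.mem_torsion_iff]
    refine ⟨⟨(Nat.card (Qk γ k) : ℤ), ?_⟩, ?_⟩
    · rw [mem_nonZeroDivisors_iff_ne_zero]
      exact_mod_cast Nat.card_pos.ne'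
    · rw [Submonoid.mk_smul, natCast_zsmul, card_nsmul_eq_zero']
  have hq : Nat.card (Quot fun x y : Submodule.torsion ℤ (Qk γ k) =>
        ∃ j : ℕ, (g ^ j) (x : Qk γ k) = (y : Qk γ k)) =
      Nat.card (Quot fun x y : Qk γ k => ∃ j : ℕ, g^[j] x = y) := by
    refine Nat.card_congr (Quot.congr (Equiv.subtypeUnivEquiv htop) fun x y => ?_)
    simp only [Module.End.pow_apply]
    rfl
  have hgk : ∀ x, g^[k] x = x := by
    intro x
    obtain ⟨v, rfl⟩ := Submodule.mkQ_surjective _ x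
    rw [← Module.End.pow_apply, Submodule.mkQ_apply, iter_aux γ k g hg, eq_comm,
      Submodule.Quotient.eq]
    refine ⟨v, ?_⟩
    rw [Matrix.toLin'_apply, Matrix.sub_mulVec, Matrix.one_mulVec,
      Matrix.SpecialLinearGroup.coe_pow]
  rw [hq, burnside_aux g k hk hgk]
  rw [← sum_gcd_aux k hk fun d => (Matrix.trace ((γ ^ d : Matrix.SpecialLinearGroup (Fin 2) ℤ) :
          Matrix (Fin 2) (Fin 2) ℤ) - 2).natAbs]
  refine Finset.sum_congr rfl fun j _ => ?_
  have hgcd := Nat.gcd_dvd_left k j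
  have := fix_aux γ k g hg (k.gcd j) hgcd (hne _ hgcd)
  rw [hdet, ← Int.natAbs_neg, neg_sub, ← Matrix.SpecialLinearGroup.coe_pow] at this
  rw [← this]
  refine Nat.card_congr (Equiv.subtypeEquivRight fun x => ?_)
  rw [Module.End.pow_apply]
  constructor
  · intro h
    exact Function.IsPeriodicPt.gcd (hgk x) h
  · intro h
    exact Function.IsPeriodicPt.trans_dvd (f := g) h (Nat.gcd_dvd_right k j)
end

section
/- Let γ ∈ SL(2,ℤ), N ≥ 1, and w ∈ Equiv.Perm (Fin N). Let L be the ℤ-linear endomorphism of (Fin N → (Fin 2 → ℤ)) given by (L v) i = v i - γ ⬝ v (w⁻¹ i), and let C be the cokernel of L. Every σ in the centralizer Z of w in Equiv.Perm (Fin N) commutes with L via the action (σ · v) i = v (σ⁻¹ i), hence Z acts ℤ-linearly on C, preserving the torsion submodule C_tors. Then the number of orbits of Z acting on C_tors equals ∏_{k=1}^{N} C(c_k(γ) + r_k - 1, r_k), where r_k is the number of orbits of ⟨w⟩ on Fin N of cardinality k (the number of k-cycles of w, with fixed points counted as 1-cycles), C(a,b) denotes the binomial coefficient, and c_k(γ)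 is defined below. -/
namespace S12

section linalg
variable {I V Q : Type*} [AddCommGroup V] [AddCommGroup Q]

/-- twisted sum along the orbit of `i`. -/
noncomputable def phi (q : V →ₗ[ℤ] Q) (A : V ≃ₗ[ℤ] V) (w : Equiv.Perm I) (k : ℕ) (i : I) :
    (I → V) →ₗ[ℤ] Q :=
  ∑ j ∈ Finset.range k, q ∘ₗ (A⁻¹ ^ j : V ≃ₗ[ℤ] V).toLinearMap ∘ₗ LinearMap.proj ((w ^ j) i)

variable (q : V →ₗ[ℤ] Q) (A : V ≃ₗ[ℤ] V) (w : Equiv.Perm I) (k : ℕ)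

theorem phi_apply (i : I) (v : I → V) :
    phi q A w k i v = ∑ j ∈ Finset.range k, q ((A⁻¹ ^ j : V ≃ₗ[ℤ] V) (v ((w ^ j) i))) := by
  simp [phi]

theorem q_pow (hq : ∀ u, q u = 0 ↔ ∃ x, u = x - (A ^ k) x) (u : V) :
    q ((A⁻¹ ^ k : V ≃ₗ[ℤ] V) u) = q u := by
  rw [← sub_eq_zero, ← map_sub, hq]
  refine ⟨(A⁻¹ ^ k : V ≃ₗ[ℤ] V) u, ?_⟩
  rw [← LinearEquiv.mul_apply, inv_pow, mul_inv_cancel, LinearEquiv.coe_one, id]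

theorem q_pow' (hq : ∀ u, q u = 0 ↔ ∃ x, u = x - (A ^ k) x) (u : V) :
    q ((A ^ k) u) = q u := by
  rw [eq_comm, ← sub_eq_zero, ← map_sub, hq]
  exact ⟨u, rfl⟩

theorem phi_L (hq : ∀ u, q u = 0 ↔ ∃ x, u = x - (A ^ k) x) (i : I) (hi : (w ^ k) i = i)
    (x : I → V) : phi q A w k i (fun i => x i - A (x (w⁻¹ i))) = 0 := by
  rw [phi_apply]
  have : ∀ j ∈ Finset.range k,
      q ((A⁻¹ ^ j : V ≃ₗ[ℤ] V) (x ((w ^ j) i) - A (x (w⁻¹ ((w ^ j) i))))) =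
      (fun j => q ((A⁻¹ ^ j : V ≃ₗ[ℤ] V) (A (x (w⁻¹ ((w ^ j) i)))))) (j+1) -
      (fun j => q ((A⁻¹ ^ j : V ≃ₗ[ℤ] V) (A (x (w⁻¹ ((w ^ j) i)))))) j := by
    intro j _
    simp only [map_sub]
    congr 2
    rw [pow_succ, pow_succ', LinearEquiv.mul_apply, Equiv.Perm.mul_apply, show w⁻¹ (w ((w ^ j) i)) = (w ^ j) i from w.symm_apply_apply _,
      ← LinearEquiv.mul_apply A⁻¹ A, inv_mul_cancel]
    rfl
  rw [Finset.sum_congr rfl this,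
    Finset.sum_range_sub (fun j => q ((A⁻¹ ^ j : V ≃ₗ[ℤ] V) (A (x (w⁻¹ ((w ^ j) i))))))]
  simp only [hi, pow_zero, q_pow q A k hq]
  simp

theorem phi_w (hq : ∀ u, q u = 0 ↔ ∃ x, u = x - (A ^ k) x) (i : I) (hi : (w ^ k) i = i)
    (G : Module.End ℤ Q) (hG : ∀ u, G (q u) = q (A u)) (v : I → V) :
    phi q A w k (w i) v = G (phi q A w k i v) := by
  rw [phi_apply, phi_apply, map_sum]
  have : ∀ j ∈ Finset.range k,
      q ((A⁻¹ ^ j : V ≃ₗ[ℤ] V) (v ((w ^ j) (w i)))) =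
      (fun j => G (q ((A⁻¹ ^ j : V ≃ₗ[ℤ] V) (v ((w ^ j) i))))) (j+1) := by
    intro j _
    simp only [hG]
    rw [← Equiv.Perm.mul_apply, ← pow_succ, pow_succ' A⁻¹, ← LinearEquiv.mul_apply,
      mul_inv_cancel_left]
  rw [Finset.sum_congr rfl this]
  have h1 := Finset.sum_range_succ (fun j => G (q ((A⁻¹ ^ j : V ≃ₗ[ℤ] V) (v ((w ^ j) i))))) k
  have h2 := Finset.sum_range_succ' (fun j => G (q ((A⁻¹ ^ j : V ≃ₗ[ℤ] V) (v ((w ^ j) i))))) k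
  rw [h1] at h2
  rw [hi, q_pow q A k hq] at h2
  simp only [pow_zero] at h2
  exact (add_right_cancel h2).symm

theorem phi_w_pow (hq : ∀ u, q u = 0 ↔ ∃ x, u = x - (A ^ k) x) (i : I) (hi : (w ^ k) i = i)
    (G : Module.End ℤ Q) (hG : ∀ u, G (q u) = q (A u)) (v : I → V) (n : ℕ) :
    phi q A w k ((w ^ n) i) v = (G ^ n) (phi q A w k i v) := by
  induction n with
  | zero => simp
  | succ n ih =>
    rw [pow_succ', Equiv.Perm.mul_apply, phi_w q A w k hq _ _ G hG, ih, pow_succ' G]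
    · rfl
    · rw [← Equiv.Perm.mul_apply, ← pow_add, add_comm, pow_add, Equiv.Perm.mul_apply, hi]

theorem phi_perm (σ : Equiv.Perm I) (hσ : Commute σ w) (i : I) (v : I → V) :
    phi q A w k i (fun i => v (σ⁻¹ i)) = phi q A w k (σ⁻¹ i) v := by
  rw [phi_apply, phi_apply]
  refine Finset.sum_congr rfl fun j _ => ?_
  rw [← Equiv.Perm.mul_apply, ← Equiv.Perm.mul_apply, (hσ.inv_left.pow_right j).eq]

theorem G_pow (hq : ∀ u, q u = 0 ↔ ∃ x, u = x - (A ^ k) x) (hs : Function.Surjective q)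
    (G : Module.End ℤ Q) (hG : ∀ u, G (q u) = q (A u)) : G ^ k = 1 := by
  have h : ∀ n u, (G ^ n) (q u) = q ((A ^ n) u) := by
    intro n
    induction n with
    | zero => intro u; simp
    | succ n ih => intro u; rw [pow_succ, pow_succ, Module.End.mul_apply, hG, ih]; rfl
  ext x
  obtain ⟨u, rfl⟩ := hs x
  rw [h, q_pow' q A k hq]; rfl

theorem G_equiv (hk : 1 ≤ k) (G : Module.End ℤ Q) (hG : G ^ k = 1) (T : Submodule ℤ Q) :
    Equivalence (fun x y : T => ∃ j : ℕ, (G ^ j) (x : Q) = (y : Q)) := by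
  refine ⟨fun x => ⟨0, by simp⟩, ?_, ?_⟩
  · rintro x y ⟨j, h⟩
    refine ⟨(k - 1) * j, ?_⟩
    rw [← h, ← Module.End.mul_apply, ← pow_add]
    have : (k - 1) * j + j = k * j := by
      obtain ⟨m, rfl⟩ := Nat.exists_eq_add_of_le hk
      rw [Nat.add_sub_cancel_left]; ring
    rw [this, pow_mul, hG, one_pow]; rfl
  · rintro x y z ⟨j, h⟩ ⟨l, h'⟩
    refine ⟨l + j, ?_⟩
    rw [pow_add, Module.End.mul_apply, h, h']

end linalg

section counting

theorem map_univ {α β : Type*} [Fintype α] (f g : α → β)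
    (h : Finset.univ.val.map f = Finset.univ.val.map g) : ∃ π : Equiv.Perm α, ∀ a, f a = g (π a) := by
  classical
  have : ∀ b, Nonempty ({a // f a = b} ≃ {a // g a = b}) := by
    intro b
    refine Fintype.card_eq.mp ?_
    have := congrArg (Multiset.count b) h
    rw [Multiset.count_map, Multiset.count_map] at this
    rw [Fintype.card_subtype, Fintype.card_subtype]
    simpa [Finset.card, Finset.filter, eq_comm] using this
  refine ⟨Equiv.ofFiberEquiv (f := f) (g := g) (fun b => (this b).some), fun a => ?_⟩
  exact (Equiv.ofFiberEquiv_map _ a).symm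

theorem card_quot {T K : Type*} [Fintype K] (r : T → T → Prop) (Ω X : K → Type*)
    [∀ k, Finite (Ω k)] [∀ k, Finite (X k)] (F : T → ∀ k, Ω k → X k)
    (hF : Function.Surjective F)
    (h1 : ∀ x y, r x y → ∀ k, ∃ π : Equiv.Perm (Ω k), ∀ o, F x k o = F y k (π o))
    (h2 : ∀ x y, (∀ k, ∃ π : Equiv.Perm (Ω k), ∀ o, F x k o = F y k (π o)) → r x y) :
    Nat.card (Quot r) = ∏ k, (Nat.card (X k) + Nat.card (Ω k) - 1).choose (Nat.card (Ω k)) := by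
  classical
  have i1 : ∀ k, Fintype (Ω k) := fun k => Fintype.ofFinite _
  have i2 : ∀ k, Fintype (X k) := fun k => Fintype.ofFinite _
  let S : (x : T) → ∀ k, Sym (X k) (Fintype.card (Ω k)) := fun x k =>
    ⟨Finset.univ.val.map (F x k), by simp⟩
  let S' : Quot r → ∀ k, Sym (X k) (Fintype.card (Ω k)) := Quot.lift S (by
    intro x y h
    funext k
    obtain ⟨π, hπ⟩ := h1 x y h k
    refine Subtype.ext ?_
    change Multiset.map (F x k) _ = Multiset.map (F y k) _
    have : F x k = F y k ∘ π := funext hπ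
    rw [this, ← Multiset.map_map]
    congr 1
    exact congrArg Finset.val (Finset.map_univ_equiv π))
  have hS : Function.Bijective S' := by
    constructor
    · rintro ⟨x⟩ ⟨y⟩ h
      refine Quot.sound (h2 x y fun k => map_univ _ _ ?_)
      exact congrArg Subtype.val (congrFun h k)
    · intro s
      have : ∀ k, ∃ f : Ω k → X k, Finset.univ.val.map f = (s k).1 := by
        intro k
        obtain ⟨m, hm⟩ := s k
        obtain ⟨l, rfl⟩ := Quot.exists_rep m
        have hl : l.length = Fintype.card (Ω k) := hm
        let e : Ω k ≃ Fin l.length := (Fintype.equivFin _).trans (finCongr hl.symm)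
        refine ⟨l.get ∘ e, ?_⟩
        rw [← Multiset.map_map]
        have : Multiset.map e Finset.univ.val = Finset.univ.val :=
          congrArg Finset.val (Finset.map_univ_equiv e)
        rw [this]
        simp [Fin.univ_val_map]
      choose f hf using this
      obtain ⟨x, hx⟩ := hF f
      refine ⟨Quot.mk _ x, funext fun k => Subtype.ext ?_⟩
      change Multiset.map (F x k) _ = _
      rw [hx, hf]
  rw [Nat.card_eq_of_bijective _ hS, Nat.card_pi]
  refine Finset.prod_congr rfl fun k _ => ?_
  rw [Nat.card_eq_fintype_card, Sym.card_sym_eq_multichoose, Nat.multichoose_eq,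
    Nat.card_eq_fintype_card, Nat.card_eq_fintype_card]

end counting

section orbits
variable {I : Type*} [Finite I] (w : Equiv.Perm I)

/-- orbits of `w`. -/
abbrev Orb := MulAction.orbitRel.Quotient (Subgroup.zpowers w) I

/-- the orbit of a point. -/
abbrev orb (i : I) : Orb w := Quotient.mk'' i

theorem orb_out (o : Orb w) : orb w o.out = o := Quotient.out_eq' o

theorem orb_pow (n : ℕ) (i : I) : orb w ((w ^ n) i) = orb w i :=
  Quotient.sound' ⟨⟨w ^ n, Subgroup.npow_mem_zpowers w n⟩, rfl⟩

theorem card_orb (i : I) : Nat.card (orb w i).orbit = Function.minimalPeriod (fun x => w • x) i := by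
  classical
  have := Fintype.ofFinite (MulAction.orbit (Subgroup.zpowers w) i)
  rw [MulAction.minimalPeriod_eq_card, ← Nat.card_eq_fintype_card]
  rfl

theorem card_pos (o : Orb w) : 1 ≤ Nat.card o.orbit := by
  have : Nonempty o.orbit := ⟨o.out, by
    rw [MulAction.orbitRel.Quotient.mem_orbit]; exact orb_out w o⟩
  exact Nat.card_pos

theorem card_le (o : Orb w) : Nat.card o.orbit ≤ Nat.card I :=
  Nat.card_le_card_of_injective Subtype.val Subtype.val_injective

theorem pow_fix (i : I) : (w ^ (Nat.card (orb w i).orbit)) i = i := by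
  have := (MulAction.pow_smul_eq_iff_minimalPeriod_dvd (a := w) (b := i)
    (n := Nat.card (orb w i).orbit)).2 (by rw [card_orb])
  exact this

theorem pow_eq_iff (i : I) (m n : ℕ) :
    (w ^ m) i = (w ^ n) i ↔ m ≡ n [MOD Nat.card (orb w i).orbit] := by
  rw [card_orb]
  wlog h : m ≤ n generalizing m n
  · rw [eq_comm, this n m (le_of_not_ge h)]
    exact ⟨Nat.ModEq.symm, Nat.ModEq.symm⟩
  · obtain ⟨d, rfl⟩ := Nat.exists_eq_add_of_le h
    rw [pow_add, Equiv.Perm.mul_apply, EmbeddingLike.apply_eq_iff_eq, eq_comm]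
    have := MulAction.pow_smul_eq_iff_minimalPeriod_dvd (a := w) (b := i) (n := d)
    rw [Equiv.Perm.smul_def] at this
    rw [this, Nat.ModEq.comm, Nat.add_modEq_left_iff]

theorem exists_pow (i i' : I) (h : orb w i = orb w i') :
    ∃ n < Nat.card (orb w i).orbit, (w ^ n) i = i' := by
  have h' := Quotient.exact' h.symm
  obtain ⟨⟨g, hg⟩, hgi⟩ := h'
  obtain ⟨n, hn⟩ := (mem_powers_iff_mem_zpowers (x := w)).2 hg
  refine ⟨n % _, Nat.mod_lt _ (card_pos w _), ?_⟩
  rw [(pow_eq_iff w i _ n).2 (Nat.mod_modEq _ _)]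
  simp only at hn
  rw [hn]
  exact hgi

theorem exists_perm (c : Orb w → I) (hc : Function.Injective fun o => orb w (c o))
    (hs : ∀ o, Nat.card (orb w (c o)).orbit = Nat.card o.orbit) :
    ∃ σ : Equiv.Perm I, Commute σ w ∧ ∀ o, σ o.out = c o := by
  have : ∀ i, ∃ n, (w ^ n) (orb w i).out = i := by
    intro i
    obtain ⟨n, -, h⟩ := exists_pow w (orb w i).out i (orb_out w _)
    exact ⟨n, h⟩
  choose p hp using this
  have key : ∀ o m n, (w ^ m) (c o) = (w ^ n) (c o) ↔ (w ^ m) o.out = (w ^ n) o.out := by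
    intro o m n
    rw [pow_eq_iff, pow_eq_iff, hs, orb_out]
  let f : I → I := fun i => (w ^ (p i)) (c (orb w i))
  have hf : Function.Injective f := by
    intro i i' h
    have h1 : orb w i = orb w i' := by
      apply hc
      have := congrArg (orb w) h
      simpa only [f, orb_pow] using this
    simp only [f] at h
    rw [← h1, key, hp] at h
    rw [h, h1, hp]
  let σ := Equiv.ofBijective f (Finite.injective_iff_bijective.1 hf)
  refine ⟨σ, ?_, ?_⟩
  · ext i
    change f (w i) = w (f i)
    have h1 : orb w (w i) = orb w i := orb_pow w 1 i
    simp only [f]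
    rw [h1, ← Equiv.Perm.mul_apply, ← pow_succ', key]
    conv_lhs => rw [← h1, hp]
    rw [pow_succ', Equiv.Perm.mul_apply, hp]
  · intro o
    change f _ = _
    simp only [f]
    rw [orb_out]
    refine ((key o _ 0).2 ?_)
    have := hp o.out
    rw [orb_out] at this
    rw [this]; rfl

end orbits

section core
variable {I V C : Type*} [Fintype I] [DecidableEq I] [AddCommGroup V] [AddCommGroup C]
  (A : V ≃ₗ[ℤ] V) (w : Equiv.Perm I) (c : (I → V) →ₗ[ℤ] C)
  (hc : ∀ v, c v = 0 ↔ ∃ x : I → V, v = fun i => x i - A (x (w⁻¹ i)))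

include hc

theorem c_single (n : ℕ) (i : I) (u : V) :
    c (Pi.single ((w ^ n) i) ((A ^ n) u)) = c (Pi.single i u) := by
  induction n with
  | zero => simp
  | succ n ih =>
    rw [← ih, eq_comm, ← sub_eq_zero, ← map_sub, hc]
    refine ⟨Pi.single ((w ^ n) i) ((A ^ n) u), ?_⟩
    ext j
    rw [pow_succ', pow_succ', Equiv.Perm.mul_apply, LinearEquiv.mul_apply]
    simp only [Pi.sub_apply]
    congr 1
    by_cases h : j = w ((w ^ n) i)
    · subst h; simp
    · have : w⁻¹ j ≠ (w ^ n) i := by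
        rintro h'; apply h; rw [← h']; simp
      rw [Pi.single_eq_of_ne h, Pi.single_eq_of_ne this, map_zero]

theorem c_single' (n : ℕ) (i : I) (u : V) :
    c (Pi.single ((w ^ n) i) u) = c (Pi.single i ((A⁻¹ ^ n : V ≃ₗ[ℤ] V) u)) := by
  rw [← c_single A w c hc n i, ← LinearEquiv.mul_apply, inv_pow, mul_inv_cancel]
  rfl

theorem c_eq (v : I → V) [Fintype (Orb w)] :
    c v = ∑ o : Orb w, c (Pi.single o.out (∑ j ∈ Finset.range (Nat.card o.orbit),
      (A⁻¹ ^ j : V ≃ₗ[ℤ] V) (v ((w ^ j) o.out)))) := by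
  classical
  conv_lhs => rw [← Finset.univ_sum_single v, map_sum]
  rw [← Finset.sum_fiberwise Finset.univ (orb w)]
  refine Finset.sum_congr rfl fun o _ => ?_
  have : ∀ (s : Finset ℕ) (f : ℕ → V), Pi.single (M := fun _ : I => V) o.out (∑ j ∈ s, f j) =
      ∑ j ∈ s, Pi.single o.out (f j) := fun s f =>
    map_sum (AddMonoidHom.single (fun _ : I => V) o.out) _ _
  rw [this, map_sum]
  symm
  refine Finset.sum_nbij (fun j => (w ^ j) o.out) ?_ ?_ ?_ ?_
  · intro j _
    simp [orb_pow, orb_out]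
  · intro j hj j' hj' h
    have h' := (pow_eq_iff w _ _ _).1 h
    rw [orb_out] at h'
    simp only [Finset.coe_range, Set.mem_Iio] at hj hj'
    exact Nat.ModEq.eq_of_lt_of_lt h' hj hj'
  · intro i hi
    have hi' : orb w i = o := by simpa using hi
    obtain ⟨n, hn, h⟩ := exists_pow w o.out i ((orb_out w o).trans hi'.symm)
    rw [orb_out] at hn
    exact ⟨n, by simpa using hn, h⟩
  · intro j _
    rw [c_single' A w c hc]

variable (Q : ℕ → Type*) [∀ k, AddCommGroup (Q k)] (q : ∀ k, V →ₗ[ℤ] Q k)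
  (hq : ∀ k u, q k u = 0 ↔ ∃ x, u = x - (A ^ k) x)

include hq

theorem phi_inj (v : I → V)
    (h : ∀ o : Orb w, phi (q (Nat.card o.orbit)) A w (Nat.card o.orbit) o.out v = 0) : c v = 0 := by
  have := Fintype.ofFinite (Orb w)
  rw [c_eq A w c hc]
  refine Finset.sum_eq_zero fun o _ => ?_
  have h := h o
  rw [phi_apply, ← map_sum, hq] at h
  obtain ⟨x, hx⟩ := h
  rw [hx, Pi.single_sub, map_sub, sub_eq_zero, ← c_single A w c hc (Nat.card o.orbit)]
  have := pow_fix w o.out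
  rw [orb_out] at this
  rw [this]

theorem phi_congr (k : ℕ) (i : I) (hi : (w ^ k) i = i) (v v' : I → V) (h : c v = c v') :
    phi (q k) A w k i v = phi (q k) A w k i v' := by
  rw [← sub_eq_zero, ← map_sub, hc] at h
  obtain ⟨x, hx⟩ := h
  rw [← sub_eq_zero, ← map_sub, hx]
  exact phi_L _ A w k (hq k) i hi x

theorem phi_tors (k : ℕ) (i : I) (hi : (w ^ k) i = i) (v : I → V)
    (h : c v ∈ Submodule.torsion ℤ C) :
    phi (q k) A w k i v ∈ Submodule.torsion ℤ (Q k) := by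
  rw [Submodule.mem_torsion_iff] at h ⊢
  obtain ⟨a, ha⟩ := h
  refine ⟨a, ?_⟩
  have := phi_congr A w c hc Q q hq k i hi ((a : ℤ) • v) 0 (by rw [map_smul, map_zero]; exact ha)
  rw [map_smul, map_zero] at this
  exact this

theorem phi_surj (u : Orb w → V)
    (hu : ∀ o : Orb w, q (Nat.card o.orbit) (u o) ∈ Submodule.torsion ℤ (Q (Nat.card o.orbit))) :
    ∃ v, c v ∈ Submodule.torsion ℤ C ∧
      ∀ o : Orb w, phi (q (Nat.card o.orbit)) A w (Nat.card o.orbit) o.out v =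
        q (Nat.card o.orbit) (u o) := by
  classical
  have := Fintype.ofFinite (Orb w)
  let v : I → V := fun i => if i = (orb w i).out then u (orb w i) else 0
  have hv : ∀ o : Orb w, phi (q (Nat.card o.orbit)) A w (Nat.card o.orbit) o.out v =
        q (Nat.card o.orbit) (u o) := by
    intro o
    rw [phi_apply, Finset.sum_eq_single 0]
    · simp [v, orb_out]
    · intro j hj hj0
      have : v ((w ^ j) o.out) = 0 := by
        simp only [v]
        rw [if_neg]
        rw [orb_pow, orb_out]
        intro h
        apply hj0
        have h' := (pow_eq_iff w o.out j 0).1 h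
        rw [orb_out] at h'
        exact Nat.ModEq.eq_of_lt_of_lt h' (by simpa using hj) (card_pos w o)
      rw [this, map_zero, map_zero]
    · intro h
      exact absurd (Finset.mem_range.2 (card_pos w o)) h
  refine ⟨v, ?_, hv⟩
  simp only [Submodule.mem_torsion_iff] at hu ⊢
  choose a ha using hu
  refine ⟨∏ o, a o, ?_⟩
  have : c (((∏ o, a o : nonZeroDivisors ℤ) : ℤ) • v) = 0 := by
    apply phi_inj A w c hc Q q hq
    intro o
    rw [map_smul, hv]
    rw [← Finset.prod_erase_mul _ _ (Finset.mem_univ o), Submonoid.coe_mul, mul_smul]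
    have := ha o
    rw [Submonoid.smul_def] at this
    rw [this, smul_zero]
  rw [map_smul] at this
  exact this

theorem core (hcs : Function.Surjective c) (hqs : ∀ k, Function.Surjective (q k))
    (hfin : ∀ k, Finite (Submodule.torsion ℤ (Q k)))
    (g : ∀ k, Module.End ℤ (Q k)) (hg : ∀ k u, g k (q k u) = q k (A u))
    (act : Equiv.Perm I → Module.End ℤ C)
    (hact : ∀ σ, Commute σ w → ∀ v, act σ (c v) = c (fun i => v (σ⁻¹ i))) :
    Nat.card (Quot fun x y : Submodule.torsion ℤ C =>
      ∃ σ, Commute σ w ∧ act σ (x : C) = (y : C)) =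
    ∏ k ∈ Finset.Icc 1 (Nat.card I),
      Nat.choose
        (Nat.card (Quot fun x y : Submodule.torsion ℤ (Q k) =>
            ∃ j : ℕ, (g k ^ j) (x : Q k) = (y : Q k)) +
          Nat.card {o : Orb w // Nat.card o.orbit = k} - 1)
        (Nat.card {o : Orb w // Nat.card o.orbit = k}) := by
  classical
  rw [← Finset.prod_coe_sort]
  have hfix : ∀ (i : I) (k : ℕ), Nat.card (orb w i).orbit = k → (w ^ k) i = i := by
    rintro i k rfl; exact pow_fix w i
  have hfix' : ∀ (o : Orb w) (k : ℕ), Nat.card o.orbit = k → (w ^ k) o.out = o.out := by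
    intro o k h; apply hfix; rw [orb_out, h]
  choose l hl using hcs
  have hlt : ∀ x : Submodule.torsion ℤ C, c (l x) ∈ Submodule.torsion ℤ C := by
    intro x; rw [hl]; exact x.2
  have hE : ∀ k : Finset.Icc 1 (Nat.card I), Equivalence
      (fun x y : Submodule.torsion ℤ (Q k) => ∃ j : ℕ, (g k ^ j) (x : Q k) = (y : Q k)) :=
    fun k => G_equiv k.1 (Finset.mem_Icc.1 k.2).1 (g k)
      (G_pow (q k) A k (hq k) (hqs k) (g k) (hg k)) _
  refine card_quot _ (fun k : Finset.Icc 1 (Nat.card I) => {o : Orb w // Nat.card o.orbit = k})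
    (fun k : Finset.Icc 1 (Nat.card I) => Quot fun x y : Submodule.torsion ℤ (Q k) =>
            ∃ j : ℕ, (g k ^ j) (x : Q k) = (y : Q k))
    (fun x k o => Quot.mk _ ⟨phi (q k) A w k o.1.out (l x),
      phi_tors A w c hc Q q hq k _ (hfix' _ _ o.2) _ (hlt x)⟩) ?_ ?_ ?_
  · intro f
    have hk : ∀ o : Orb w, Nat.card o.orbit ∈ Finset.Icc 1 (Nat.card I) := fun o =>
      Finset.mem_Icc.2 ⟨card_pos w o, card_le w o⟩
    have : ∀ o : Orb w, ∃ u : V, ∃ h : q (Nat.card o.orbit) u ∈ Submodule.torsion ℤ _,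
        Quot.mk _ ⟨_, h⟩ = f ⟨_, hk o⟩ ⟨o, rfl⟩ := by
      intro o
      obtain ⟨⟨y, hy⟩, hy'⟩ := Quot.exists_rep (f ⟨_, hk o⟩ ⟨o, rfl⟩)
      obtain ⟨u, rfl⟩ := hqs _ y
      exact ⟨u, hy, hy'⟩
    choose u hu hu' using this
    obtain ⟨v, hvt, hv⟩ := phi_surj A w c hc Q q hq u hu
    refine ⟨⟨c v, hvt⟩, ?_⟩
    funext ⟨k, hkk⟩ ⟨o, ho⟩
    simp only at ho
    subst ho
    rw [← hu' o]
    simp only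
    congr 2
    rw [← hv]
    exact phi_congr A w c hc Q q hq _ _ (hfix' _ _ rfl) _ _ (hl _)
  · rintro x y ⟨σ, hσ, hxy⟩ k
    -- the permutation induced by `σ`
    have hcard : ∀ i, orb w i = orb w i → Nat.card (orb w (σ i)).orbit = Nat.card (orb w i).orbit := by
      intro i _
      rw [card_orb, card_orb]
      refine Function.minimalPeriod_eq_minimalPeriod_iff.2 fun n => ?_
      simp only [Function.IsPeriodicPt, Function.IsFixedPt]
      rw [smul_iterate]
      simp only [Equiv.Perm.smul_def]
      rw [← Equiv.Perm.mul_apply, ← (hσ.pow_right n).eq, Equiv.Perm.mul_apply,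
        EmbeddingLike.apply_eq_iff_eq]
    have horb : ∀ i i', orb w i = orb w i' → orb w (σ i) = orb w (σ i') := by
      intro i i' h
      obtain ⟨n, -, rfl⟩ := exists_pow w i i' h
      rw [← Equiv.Perm.mul_apply, (hσ.pow_right n).eq, Equiv.Perm.mul_apply, orb_pow]
    have horb' : ∀ i i', orb w (σ i) = orb w (σ i') → orb w i = orb w i' := by
      intro i i' h
      obtain ⟨n, -, h⟩ := exists_pow w _ _ h
      rw [← Equiv.Perm.mul_apply, ← (hσ.pow_right n).eq, Equiv.Perm.mul_apply,
        EmbeddingLike.apply_eq_iff_eq] at h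
      rw [← h, orb_pow]
    let f : {o : Orb w // Nat.card o.orbit = k} → {o : Orb w // Nat.card o.orbit = k} :=
      fun o => ⟨orb w (σ o.1.out), by rw [hcard _ rfl, orb_out, o.2]⟩
    have hf : Function.Injective f := by
      intro o o' h
      have := horb' _ _ (congrArg Subtype.val h)
      rw [orb_out, orb_out] at this
      exact Subtype.ext this
    refine ⟨Equiv.ofBijective f (Finite.injective_iff_bijective.1 hf), fun o => ?_⟩
    rw [Equiv.ofBijective_apply]
    refine Quot.sound ?_
    simp only
    obtain ⟨n, -, hn⟩ := exists_pow w (σ o.1.out) (f o).1.out (orb_out w (f o).1).symm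
    refine ⟨n, ?_⟩
    have h1 : (w ^ (k : ℕ)) (σ o.1.out) = σ o.1.out := hfix _ _ (f o).2
    rw [← hn, phi_w_pow _ A w k (hq k) _ h1 (g k) (hg k)]
    congr 1
    have h2 : c (fun i => l x (σ⁻¹ i)) = c (l y) := by
      rw [← hact σ hσ, hl, hl, hxy]
    rw [← phi_congr A w c hc Q q hq k _ h1 _ _ h2, phi_perm _ A w k σ hσ]
    simp
  · intro x y h
    choose π hπ using h
    have hk : ∀ o : Orb w, Nat.card o.orbit ∈ Finset.Icc 1 (Nat.card I) := fun o =>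
      Finset.mem_Icc.2 ⟨card_pos w o, card_le w o⟩
    let P : Orb w → Orb w := fun o => (π ⟨_, hk o⟩ ⟨o, rfl⟩).1
    have hP : ∀ o, Nat.card (P o).orbit = Nat.card o.orbit := fun o => (π ⟨_, hk o⟩ ⟨o, rfl⟩).2
    have hP' : ∀ o (k : Finset.Icc 1 (Nat.card I)) (h : Nat.card o.orbit = k),
        P o = (π k ⟨o, h⟩).1 := by
      rintro o ⟨k, hkk⟩ h
      simp only at h
      subst h
      rfl
    have hPinj : Function.Injective P := by
      intro o o' h
      have hc' : Nat.card o'.orbit = Nat.card o.orbit := by rw [← hP o, ← hP o', h]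
      rw [hP' o ⟨_, hk o⟩ rfl, hP' o' ⟨_, hk o⟩ hc'] at h
      exact congrArg Subtype.val ((π ⟨_, hk o⟩).injective (Subtype.ext h))
    have : ∀ o : Orb w, ∃ i : I, orb w i = P o ∧
        phi (q (Nat.card o.orbit)) A w (Nat.card o.orbit) i (l y) =
        phi (q (Nat.card o.orbit)) A w (Nat.card o.orbit) o.out (l x) := by
      intro o
      obtain ⟨j, hj⟩ := ((hE ⟨_, hk o⟩).quot_mk_eq_iff _ _).1 (hπ ⟨_, hk o⟩ ⟨o, rfl⟩).symm
      refine ⟨(w ^ j) (P o).out, by rw [orb_pow, orb_out], ?_⟩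
      rw [phi_w_pow _ A w _ (hq _) _ (hfix' _ _ (hP o)) (g _) (hg _)]
      exact hj
    choose b hb hb' using this
    obtain ⟨σ, hσ, hσb⟩ := exists_perm w b (by intro o o' h; simp only [hb] at h; exact hPinj h)
      (by intro o; rw [hb, hP])
    refine ⟨σ, hσ, ?_⟩
    have h1 : c (l x - fun i => l y (σ i)) = 0 := by
      apply phi_inj A w c hc Q q hq
      intro o
      have := phi_perm (q (Nat.card o.orbit)) A w (Nat.card o.orbit) σ⁻¹ hσ.inv_left o.out (l y)
      rw [inv_inv] at this
      rw [map_sub, this, hσb, hb', sub_self]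
    rw [map_sub, sub_eq_zero, hl] at h1
    rw [h1, hact σ hσ]
    simp [hl]
end core
end S12

/-- let `L` be the endomorphism `Id_{2N} - w ⊗ γ` of `Fin N → (Fin 2 → ℤ)`
and `C` its cokernel.  Every `σ` in the centralizer `Z` of `w` commutes with `L` (via
`(σ · v) i = v (σ⁻¹ i)`), hence `Z` acts on `C` preserving its torsion submodule, and the
number of orbits of `Z` on `C_tors` equals `∏_{k=1}^N C(c_k(γ) + r_k - 1, r_k)`, where
`r_k` is the number of orbits of `⟨w⟩` on `Fin N` of cardinality `k` and `c_k(γ)` is the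
number of orbits of the endomorphism of `Q_k(γ)` induced by `γ` acting on `Q_k(γ)_tors`. -/
theorem stmt12 (γ : Matrix.SpecialLinearGroup (Fin 2) ℤ) (N : ℕ) (hN : 1 ≤ N)
    (w : Equiv.Perm (Fin N))
    (L : (Fin N → Fin 2 → ℤ) →ₗ[ℤ] (Fin N → Fin 2 → ℤ))
    (hL : ∀ (v : Fin N → Fin 2 → ℤ) (i : Fin N),
      L v i = v i - Matrix.mulVec (γ : Matrix (Fin 2) (Fin 2) ℤ) (v (w⁻¹ i)))
    (g : ∀ k : ℕ, Module.End ℤ (Qk γ k))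
    (hg : ∀ (k : ℕ) (v : Fin 2 → ℤ), g k (Submodule.Quotient.mk v) =
      Submodule.Quotient.mk (Matrix.mulVec (γ : Matrix (Fin 2) (Fin 2) ℤ) v))
    (act : Equiv.Perm (Fin N) →
      Module.End ℤ ((Fin N → Fin 2 → ℤ) ⧸ LinearMap.range L))
    (hact : ∀ σ ∈ Subgroup.centralizer ({w} : Set (Equiv.Perm (Fin N))),
      ∀ v : Fin N → Fin 2 → ℤ,
        act σ (Submodule.Quotient.mk v) =
          Submodule.Quotient.mk (fun i => v (σ⁻¹ i))) :
    (∀ σ ∈ Subgroup.centralizer ({w} : Set (Equiv.Perm (Fin N))),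
      ∀ v : Fin N → Fin 2 → ℤ,
        L (fun i => v (σ⁻¹ i)) = fun i => L v (σ⁻¹ i)) ∧
    Nat.card (Quot fun x y :
        Submodule.torsion ℤ ((Fin N → Fin 2 → ℤ) ⧸ LinearMap.range L) =>
      ∃ σ ∈ Subgroup.centralizer ({w} : Set (Equiv.Perm (Fin N))),
        act σ (x : (Fin N → Fin 2 → ℤ) ⧸ LinearMap.range L) =
          (y : (Fin N → Fin 2 → ℤ) ⧸ LinearMap.range L)) =
    ∏ k ∈ Finset.Icc 1 N,
      Nat.choose
        (Nat.card (Quot fun x y : Submodule.torsion ℤ (Qk γ k) =>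
            ∃ j : ℕ, (g k ^ j) (x : Qk γ k) = (y : Qk γ k)) +
          Nat.card {o : MulAction.orbitRel.Quotient (Subgroup.zpowers w) (Fin N) //
            Nat.card o.orbit = k} - 1)
        (Nat.card {o : MulAction.orbitRel.Quotient (Subgroup.zpowers w) (Fin N) //
          Nat.card o.orbit = k}) := by
  have hinv : (γ : Matrix (Fin 2) (Fin 2) ℤ) * ((γ⁻¹ : Matrix.SpecialLinearGroup (Fin 2) ℤ) :
      Matrix (Fin 2) (Fin 2) ℤ) = 1 := by
    rw [← Matrix.SpecialLinearGroup.coe_mul, mul_inv_cancel, Matrix.SpecialLinearGroup.coe_one]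
  have hinv' : ((γ⁻¹ : Matrix.SpecialLinearGroup (Fin 2) ℤ) : Matrix (Fin 2) (Fin 2) ℤ) *
      (γ : Matrix (Fin 2) (Fin 2) ℤ) = 1 := by
    rw [← Matrix.SpecialLinearGroup.coe_mul, inv_mul_cancel, Matrix.SpecialLinearGroup.coe_one]
  let A : (Fin 2 → ℤ) ≃ₗ[ℤ] (Fin 2 → ℤ) := Matrix.toLin'OfInv hinv' hinv
  have hA : ∀ u, A u = Matrix.mulVec (γ : Matrix (Fin 2) (Fin 2) ℤ) u := by
    intro u
    exact Matrix.toLin'_apply _ u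
  have hAp : ∀ (k : ℕ) u, (A ^ k) u = Matrix.mulVec
      ((γ ^ k : Matrix.SpecialLinearGroup (Fin 2) ℤ) : Matrix (Fin 2) (Fin 2) ℤ) u := by
    intro k
    induction k with
    | zero => intro u; simp
    | succ k ih =>
      intro u
      rw [pow_succ, LinearEquiv.mul_apply, ih, hA, pow_succ, Matrix.SpecialLinearGroup.coe_mul,
        Matrix.mulVec_mulVec]
  have hcent : ∀ σ, σ ∈ Subgroup.centralizer ({w} : Set (Equiv.Perm (Fin N))) ↔ Commute σ w := by
    intro σ
    rw [Subgroup.mem_centralizer_singleton_iff]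
    exact Iff.rfl
  constructor
  · intro σ hσ v
    rw [hcent] at hσ
    ext1 i
    rw [hL, hL, ← Equiv.Perm.mul_apply, ← Equiv.Perm.mul_apply, hσ.inv_inv.eq]
  · have := S12.core A w (LinearMap.range L).mkQ ?_ (Qk γ) (fun k => Submodule.mkQ _) ?_
      (Submodule.mkQ_surjective _) (fun k => Submodule.mkQ_surjective _) ?_ g ?_ act ?_
    · rw [Nat.card_fin] at this
      simp only [hcent]
      exact this
    · intro v
      rw [Submodule.mkQ_apply, Submodule.Quotient.mk_eq_zero, LinearMap.mem_range]
      refine exists_congr fun x => ?_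
      have : L x = fun i => x i - A (x (w⁻¹ i)) := by
        ext1 i
        rw [hL, hA]
      rw [this, eq_comm]
    · intro k u
      rw [Submodule.mkQ_apply, Submodule.Quotient.mk_eq_zero, LinearMap.mem_range]
      refine exists_congr fun x => ?_
      rw [Matrix.toLin'_apply, Matrix.sub_mulVec, Matrix.one_mulVec, hAp, eq_comm]
    · intro k
      exact Module.finite_of_fg_torsion _ Submodule.torsion_isTorsion
    · intro k u
      rw [hA]; exact hg k u
    · intro σ hσ v
      exact hact σ ((hcent σ).2 hσ) v
end
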